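/- Let 𝕏_i = (X_i, d_{X_i}, ξ_i), i = 1, 2, be mm-spaces and let (Z, d_Z) be a compact metric space such that for each i there exists an isometric embedding of supp ξ_i into Z. Let (λ_n)_{n ∈ ℕ} be a sequence with λ_n → ∞ and for each n let π_n be a minimizer of EW_{λ_n}(𝕏₁, 𝕏₂). Then (π_n) converges weakly, up to a subsequence, to some π ∈ 𝒫(Z × Z), and there exist isometric embeddings I_i : supp ξ_i → Z realizing EW(𝕏₁, 𝕏₂) such that π is an optimal transport plan between I₁_#ξ₁ and I₂_#ξ₂, i.e., π ∈ Π(I₁_#ξ₁, I₂_#ξ₂) with ∫ d_Z(z, z')² dπ = W₂²(I₁_#ξ₁, I₂_#ξ₂) = EW²(𝕏₁, 𝕏₂). -/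

import Mathlib

/-!
Testing the minimality of `π n` against any coupling `ρ` of two pushforwards `I₁,#ξ₁`, `I₂,#ξ₂`
under isometric embeddings, for which both Gromov--Wasserstein terms vanish, gives
`∫ d² dπₙ + λₙ (GW² + GW²) ≤ ∫ d² dρ` (`EWobj_le_of_coupling`). Hence `∫ d² dπₙ ≤ ∫ d² dρ`, and
both Gromov--Wasserstein terms are `O(1 / λₙ)`.

By compactness of the space of probability measures on `Z × Z`, a subsequence converges to
some `πl`, whose marginals are limits of measures with Gromov--Wasserstein distance to `ξᵢ`
tending to zero. Such a limit is `I,#ξᵢ` for an isometric embedding `I` of the support of `ξᵢ`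
(`exists_isometry_of_tendsto`): near-optimal plans between `ξᵢ` and the marginals subconverge to a
plan `γ` of zero Gromov--Wasserstein cost, any two points `(x, z)`, `(x', z')` of the support of
`γ` satisfy `d(x, x') = d(z, z')`, and so the support is the graph of an isometry
(`exists_isometry_of_GWobj_eq_zero`).

Passing to the limit in `∫ d² dπₙ ≤ ∫ d² dρ` shows that `πl` has least cost among all couplings of
all isometrically embedded copies of `ξ₁` and `ξ₂`, which yields both optimality claims.
-/

open MeasureTheory Filter Topology

noncomputable section

/-- The set of couplings (transport plans) between two measures. -/
def couplings {X Y : Type*} [MeasurableSpace X] [MeasurableSpace Y]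
    (μ : Measure X) (ν : Measure Y) : Set (Measure (X × Y)) :=
  {π | π.map Prod.fst = μ ∧ π.map Prod.snd = ν}

/-- Squared Wasserstein-2 distance. -/
noncomputable def W2sq {Z : Type*} [MetricSpace Z] [MeasurableSpace Z]
    (μ ν : Measure Z) : ℝ :=
  ⨅ π : couplings μ ν, ∫ p : Z × Z, dist p.1 p.2 ^ 2 ∂(π.1)

/-- Wasserstein-2 distance. -/
noncomputable def W2 {Z : Type*} [MetricSpace Z] [MeasurableSpace Z]
    (μ ν : Measure Z) : ℝ := Real.sqrt (W2sq μ ν)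

/-- The Gromov--Wasserstein objective of a plan `γ`. -/
noncomputable def GWobj {X Y : Type*} [MetricSpace X] [MetricSpace Y]
    [MeasurableSpace X] [MeasurableSpace Y]
    (γ : Measure (X × Y)) : ℝ :=
  ∫ q : (X × Y) × (X × Y),
    (dist q.1.1 q.2.1 - dist q.1.2 q.2.2) ^ 2 ∂(γ.prod γ)

/-- Squared Gromov--Wasserstein distance between `(X, d_X, ξ)` and `(Y, d_Y, ν)`. -/
noncomputable def GWsq {X Y : Type*} [MetricSpace X] [MetricSpace Y]
    [MeasurableSpace X] [MeasurableSpace Y]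
    (ξ : Measure X) (ν : Measure Y) : ℝ :=
  ⨅ γ : couplings ξ ν, GWobj γ.1

/-- The support of a measure: points all of whose open neighborhoods have positive measure. -/
def msupport {X : Type*} [TopologicalSpace X] [MeasurableSpace X] (ξ : Measure X) : Set X :=
  {x | ∀ U : Set X, IsOpen U → x ∈ U → 0 < ξ U}

/-- Pushforward `I,#ξ` of `ξ` under a map defined on the support of `ξ`. -/
noncomputable def pushSupp {X Z : Type*} [MetricSpace X] [MetricSpace Z]
    [MeasurableSpace X] [MeasurableSpace Z]
    (ξ : Measure X) (I : msupport ξ → Z) : Measure Z :=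
  Measure.map I (Measure.comap Subtype.val ξ)

/-- The objective of the `EW_λ` problem evaluated at a plan `π` on `Z × Z`. -/
noncomputable def EWobj {X₁ X₂ Z : Type*} [MetricSpace X₁] [MetricSpace X₂] [MetricSpace Z]
    [MeasurableSpace X₁] [MeasurableSpace X₂] [MeasurableSpace Z]
    (lam : ℝ) (ξ₁ : Measure X₁) (ξ₂ : Measure X₂) (π : Measure (Z × Z)) : ℝ :=
  (∫ p : Z × Z, dist p.1 p.2 ^ 2 ∂π)
    + lam * (GWsq ξ₁ (π.map Prod.fst) + GWsq ξ₂ (π.map Prod.snd))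

/-- `EW_λ(𝕏₁, 𝕏₂)²`: infimum of the `EW_λ` objective over probability measures on `Z × Z`. -/
noncomputable def EWlamSq {X₁ X₂ : Type*} (Z : Type*) [MetricSpace X₁] [MetricSpace X₂] [MetricSpace Z]
    [MeasurableSpace X₁] [MeasurableSpace X₂] [MeasurableSpace Z]
    (lam : ℝ) (ξ₁ : Measure X₁) (ξ₂ : Measure X₂) : ℝ :=
  ⨅ π : {π : Measure (Z × Z) // IsProbabilityMeasure π}, EWobj lam ξ₁ ξ₂ π.1

/-- `EW(𝕏₁, 𝕏₂)²`: infimum over isometric embeddings of the supports into `Z`. -/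
noncomputable def EWsq {X₁ X₂ : Type*} (Z : Type*) [MetricSpace X₁] [MetricSpace X₂] [MetricSpace Z]
    [MeasurableSpace X₁] [MeasurableSpace X₂] [MeasurableSpace Z]
    (ξ₁ : Measure X₁) (ξ₂ : Measure X₂) : ℝ :=
  ⨅ (I₁ : {f : msupport ξ₁ → Z // Isometry f}) (I₂ : {f : msupport ξ₂ → Z // Isometry f}),
    W2sq (pushSupp ξ₁ I₁.1) (pushSupp ξ₂ I₂.1)

/-- Weak convergence of a sequence of measures. -/
def WeakConv {Z : Type*} [TopologicalSpace Z] [MeasurableSpace Z]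
    (μs : ℕ → Measure Z) (μ : Measure Z) : Prop :=
  ∀ φ : Z → ℝ, Continuous φ →
    Tendsto (fun n => ∫ z, φ z ∂(μs n)) atTop (nhds (∫ z, φ z ∂μ))

/-! ### Measures on the support -/

lemma msupport_eq_support {X : Type*} [TopologicalSpace X] [MeasurableSpace X]
    (ξ : Measure X) : msupport ξ = ξ.support := by
  rw [Measure.support_eq_forall_isOpen]
  ext x
  exact ⟨fun h u hx hu => h u hu hx, fun h u hu hx => h u hx hu⟩

section Support

variable {X Z : Type*} [MetricSpace X] [CompactSpace X] [MetricSpace Z]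
  [MeasurableSpace X] [BorelSpace X] [MeasurableSpace Z] [BorelSpace Z]

lemma isClosed_msupport (ξ : Measure X) : IsClosed (msupport ξ) := by
  rw [msupport_eq_support]; exact Measure.isClosed_support

lemma msupport_mem_ae (ξ : Measure X) : msupport ξ ∈ ae ξ := by
  rw [msupport_eq_support]; exact Measure.support_mem_ae

lemma measurableEmbedding_msupport (ξ : Measure X) :
    MeasurableEmbedding (Subtype.val : msupport ξ → X) :=
  MeasurableEmbedding.subtype_coe (isClosed_msupport ξ).measurableSet

lemma map_comap_msupport (ξ : Measure X) :
    (Measure.comap (Subtype.val : msupport ξ → X) ξ).map Subtype.val = ξ := by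
  rw [(measurableEmbedding_msupport ξ).map_comap, Subtype.range_coe]
  exact Measure.restrict_eq_self_of_ae_mem (s := msupport ξ) (msupport_mem_ae ξ)

instance isProbabilityMeasure_comap_msupport (ξ : Measure X) [IsProbabilityMeasure ξ] :
    IsProbabilityMeasure (Measure.comap (Subtype.val : msupport ξ → X) ξ) := by
  have h := map_comap_msupport ξ
  constructor
  have h2 : (Measure.comap (Subtype.val : msupport ξ → X) ξ).map Subtype.val Set.univ = 1 := by
    rw [h]; exact measure_univ
  rwa [Measure.map_apply measurable_subtype_coe MeasurableSet.univ, Set.preimage_univ] at h2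

lemma isProbabilityMeasure_pushSupp (ξ : Measure X) [IsProbabilityMeasure ξ]
    {I : msupport ξ → Z} (hI : Isometry I) : IsProbabilityMeasure (pushSupp ξ I) :=
  Measure.isProbabilityMeasure_map hI.continuous.measurable.aemeasurable

end Support

lemma isProbabilityMeasure_of_mem_couplings {X Y : Type*} [MeasurableSpace X] [MeasurableSpace Y]
    {μ : Measure X} {ν : Measure Y} [IsProbabilityMeasure μ] {γ : Measure (X × Y)}
    (h : γ ∈ couplings μ ν) : IsProbabilityMeasure γ := by
  constructor
  have h2 : γ.map Prod.fst Set.univ = 1 := by rw [h.1]; exact measure_univ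
  rwa [Measure.map_apply measurable_fst MeasurableSet.univ, Set.preimage_univ] at h2

lemma prod_mem_couplings {X Y : Type*} [MeasurableSpace X] [MeasurableSpace Y]
    (μ : Measure X) (ν : Measure Y) [IsProbabilityMeasure μ] [IsProbabilityMeasure ν] :
    μ.prod ν ∈ couplings μ ν := by
  constructor
  · simp [Measure.map_fst_prod]
  · simp [Measure.map_snd_prod]

/-! ### Vanishing of the Gromov--Wasserstein distance -/

lemma continuous_GW_integrand {X Z : Type*} [MetricSpace X] [MetricSpace Z] :
    Continuous fun q : (X × Z) × (X × Z) =>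
      (dist q.1.1 q.2.1 - dist q.1.2 q.2.2) ^ 2 := by
  fun_prop

section GW

variable {X Z : Type*} [MetricSpace X] [MetricSpace Z] [MeasurableSpace X] [MeasurableSpace Z]

lemma GWobj_nonneg (γ : Measure (X × Z)) : 0 ≤ GWobj γ :=
  integral_nonneg fun _ => sq_nonneg _

lemma GWsq_nonneg (ξ : Measure X) (ν : Measure Z) : 0 ≤ GWsq ξ ν :=
  Real.iInf_nonneg fun γ => GWobj_nonneg γ.1

lemma GWsq_le {ξ : Measure X} {ν : Measure Z} {γ : Measure (X × Z)} (h : γ ∈ couplings ξ ν) :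
    GWsq ξ ν ≤ GWobj γ :=
  ciInf_le (f := fun γ : couplings ξ ν => GWobj γ.1)
    ⟨0, by rintro _ ⟨γ, rfl⟩; exact GWobj_nonneg γ.1⟩ ⟨γ, h⟩

variable [CompactSpace X] [CompactSpace Z] [BorelSpace X] [BorelSpace Z]

lemma continuous_GWobj : Continuous fun γ : ProbabilityMeasure (X × Z) => GWobj γ.toMeasure := by
  have h1 : Continuous fun γ : ProbabilityMeasure (X × Z) => γ.prod γ :=
    ProbabilityMeasure.continuous_prod.comp (continuous_id.prodMk continuous_id)
  exact (ProbabilityMeasure.continuous_integral_continuousMap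
    (⟨_, continuous_GW_integrand⟩ : C((X × Z) × (X × Z), ℝ))).comp h1

/-- The plan induced by an isometric embedding has zero cost. -/
lemma GWsq_pushSupp (ξ : Measure X) [IsProbabilityMeasure ξ] {I : msupport ξ → Z}
    (hI : Isometry I) : GWsq ξ (pushSupp ξ I) = 0 := by
  refine le_antisymm ?_ (GWsq_nonneg _ _)
  set m := Measure.comap (Subtype.val : msupport ξ → X) ξ with hm
  have hIm : Measurable I := hI.continuous.measurable
  have hg : Measurable fun x : msupport ξ => (x.1, I x) := measurable_subtype_coe.prodMk hIm
  have hmem : m.map (fun x : msupport ξ => (x.1, I x)) ∈ couplings ξ (pushSupp ξ I) := by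
    constructor
    · rw [Measure.map_map measurable_fst hg]
      exact map_comap_msupport ξ
    · rw [Measure.map_map measurable_snd hg]
      rfl
  refine (GWsq_le hmem).trans (le_of_eq ?_)
  unfold GWobj
  rw [Measure.map_prod_map _ _ hg hg, integral_map (hg.prodMap hg).aemeasurable
    continuous_GW_integrand.measurable.aestronglyMeasurable]
  simp [hI.dist_eq, Subtype.dist_eq]

/-- On the support of a plan of zero cost, the distances of the two coordinates agree. -/
lemma dist_eq_of_mem_support {γ : Measure (X × Z)} [IsProbabilityMeasure γ] (h : GWobj γ = 0)
    {p q : X × Z} (hp : p ∈ γ.support) (hq : q ∈ γ.support) : dist p.1 q.1 = dist p.2 q.2 := by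
  have hint : Integrable (fun q : (X × Z) × (X × Z) =>
      (dist q.1.1 q.2.1 - dist q.1.2 q.2.2) ^ 2) (γ.prod γ) :=
    continuous_GW_integrand.integrable_of_hasCompactSupport (HasCompactSupport.of_compactSpace _)
  have hae := (integral_eq_zero_iff_of_nonneg (fun _ => sq_nonneg _) hint).1 h
  by_contra hne
  have hopen : IsOpen {r : (X × Z) × (X × Z) |
      (dist r.1.1 r.2.1 - dist r.1.2 r.2.2) ^ 2 ≠ 0} :=
    isOpen_ne_fun continuous_GW_integrand continuous_const
  obtain ⟨U, V, hU, hV, hpU, hqV, hUV⟩ := isOpen_prod_iff.1 hopen p q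
    (pow_ne_zero 2 (sub_ne_zero.2 hne))
  have h0 : (γ.prod γ) (U ×ˢ V) = 0 :=
    measure_mono_null hUV (ae_iff.1 hae)
  rw [Measure.prod_prod] at h0
  exact mul_ne_zero ((Measure.mem_support_iff_forall p).1 hp U (hU.mem_nhds hpU)).ne'
    ((Measure.mem_support_iff_forall q).1 hq V (hV.mem_nhds hqV)).ne' h0

/-- A plan of zero cost is concentrated on the graph of an isometric embedding. -/
lemma exists_isometry_of_GWobj_eq_zero {ξ : Measure X} {ν : Measure Z} [IsProbabilityMeasure ξ]
    {γ : Measure (X × Z)} (hγ : γ ∈ couplings ξ ν) (h : GWobj γ = 0) :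
    ∃ I : msupport ξ → Z, Isometry I ∧ ν = pushSupp ξ I := by
  have := isProbabilityMeasure_of_mem_couplings hγ
  have hae : ∀ᵐ p ∂γ, p ∈ γ.support := Measure.support_mem_ae
  have hclosed : IsClosed (Prod.fst '' γ.support) :=
    (Measure.isClosed_support.isCompact.image continuous_fst).isClosed
  have hsub : msupport ξ ⊆ Prod.fst '' γ.support := by
    rw [msupport_eq_support]
    refine Measure.support_subset_of_isClosed hclosed ?_
    rw [← hγ.1]
    refine (ae_map_iff measurable_fst.aemeasurable hclosed.measurableSet).2 ?_
    filter_upwards [hae] with p hp using ⟨p, hp, rfl⟩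
  have hex : ∀ x : msupport ξ, ∃ z : Z, (x.1, z) ∈ γ.support := by
    intro x
    obtain ⟨⟨a, z⟩, hp, hx⟩ := hsub x.2
    exact ⟨z, by rw [← hx]; exact hp⟩
  choose I hI using hex
  have hiso : Isometry I := Isometry.of_dist_eq fun x y =>
    (dist_eq_of_mem_support h (hI x) (hI y)).symm
  refine ⟨I, hiso, ?_⟩
  have hS : ∀ᵐ p ∂γ, p.1 ∈ msupport ξ := by
    refine ae_of_ae_map (p := fun x => x ∈ msupport ξ) measurable_fst.aemeasurable ?_
    rw [hγ.1]
    exact msupport_mem_ae ξ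
  ext B hB
  have hIm : Measurable I := hiso.continuous.measurable
  have hemb := measurableEmbedding_msupport ξ
  rw [pushSupp, Measure.map_apply hIm hB, hemb.comap_apply]
  have hB' : MeasurableSet (Subtype.val '' (I ⁻¹' B)) := hemb.measurableSet_image.2 (hIm hB)
  have hξ : ξ (Subtype.val '' (I ⁻¹' B)) = γ (Prod.fst ⁻¹' (Subtype.val '' (I ⁻¹' B))) := by
    rw [← Measure.map_apply measurable_fst hB']
    exact congrArg (fun μ : Measure X => μ (Subtype.val '' (I ⁻¹' B))) hγ.1.symm
  rw [hξ, ← hγ.2, Measure.map_apply measurable_snd hB]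
  refine measure_congr ?_
  filter_upwards [hae, hS] with p hp hpS
  have hpI : I ⟨p.1, hpS⟩ = p.2 := by
    have := dist_eq_of_mem_support h (hI ⟨p.1, hpS⟩) hp
    simpa using this.symm
  refine propext ⟨fun hpB => ⟨⟨p.1, hpS⟩, ?_, rfl⟩, ?_⟩
  · change I ⟨p.1, hpS⟩ ∈ B
    rw [hpI]; exact hpB
  · rintro ⟨x, hx, hxp⟩
    have hxe : x = ⟨p.1, hpS⟩ := Subtype.ext hxp
    rw [hxe] at hx
    change I ⟨p.1, hpS⟩ ∈ B at hx
    rw [hpI] at hx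
    exact hx

/-- A weak limit of measures whose Gromov--Wasserstein distance to `ξ` tends to zero is an
isometric copy of `ξ`. -/
lemma exists_isometry_of_tendsto {ξ : Measure X} [IsProbabilityMeasure ξ]
    {ν : ℕ → ProbabilityMeasure Z} {νl : ProbabilityMeasure Z}
    (hν : Tendsto ν atTop (𝓝 νl))
    (hGW : Tendsto (fun n => GWsq ξ (ν n).toMeasure) atTop (𝓝 0)) :
    ∃ I : msupport ξ → Z, Isometry I ∧ νl.toMeasure = pushSupp ξ I := by
  have hex : ∀ n : ℕ, ∃ γ : ProbabilityMeasure (X × Z),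
      γ.toMeasure ∈ couplings ξ (ν n).toMeasure ∧
      GWobj γ.toMeasure < GWsq ξ (ν n).toMeasure + 1 / ((n : ℝ) + 1) := by
    intro n
    have : Nonempty (couplings ξ (ν n).toMeasure) := ⟨⟨_, prod_mem_couplings _ _⟩⟩
    obtain ⟨γ, hγ⟩ := exists_lt_of_ciInf_lt
      (f := fun γ : couplings ξ (ν n).toMeasure => GWobj γ.1)
      (lt_add_of_pos_right (GWsq ξ (ν n).toMeasure) (Nat.one_div_pos_of_nat (n := n) (α := ℝ)))
    exact ⟨⟨γ.1, isProbabilityMeasure_of_mem_couplings γ.2⟩, γ.2, hγ⟩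
  choose γ hγ hlt using hex
  obtain ⟨γl, ψ, hψ, hlim⟩ := CompactSpace.tendsto_subseq γ
  refine exists_isometry_of_GWobj_eq_zero (γ := γl.toMeasure) ⟨?_, ?_⟩ ?_
  · have h1 := ProbabilityMeasure.tendsto_map_of_tendsto_of_continuous _ _ hlim continuous_fst
    have h2 : ∀ n, (((γ ∘ ψ) n).map continuous_fst.measurable.aemeasurable :
        ProbabilityMeasure X) = ⟨ξ, inferInstance⟩ := fun n => Subtype.ext (hγ (ψ n)).1
    simp only [h2] at h1
    exact congrArg ProbabilityMeasure.toMeasure (tendsto_nhds_unique tendsto_const_nhds h1).symm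
  · have h1 := ProbabilityMeasure.tendsto_map_of_tendsto_of_continuous _ _ hlim continuous_snd
    have h2 : ∀ n, (((γ ∘ ψ) n).map continuous_snd.measurable.aemeasurable :
        ProbabilityMeasure Z) = ν (ψ n) := fun n => Subtype.ext (hγ (ψ n)).2
    simp only [h2] at h1
    exact congrArg ProbabilityMeasure.toMeasure
      (tendsto_nhds_unique (hν.comp hψ.tendsto_atTop) h1).symm
  · have h1 : Tendsto (fun n => GWobj (γ (ψ n)).toMeasure) atTop (𝓝 (GWobj γl.toMeasure)) :=
      (continuous_GWobj.tendsto γl).comp hlim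
    have h2 : Tendsto (fun n => GWobj (γ n).toMeasure) atTop (𝓝 0) := by
      refine squeeze_zero (fun n => GWobj_nonneg _) (fun n => (hlt n).le) ?_
      simpa using hGW.add (tendsto_one_div_add_atTop_nhds_zero_nat (𝕜 := ℝ))
    exact tendsto_nhds_unique h1 (h2.comp hψ.tendsto_atTop)

end GW

/-! ### The penalized problem -/

lemma cost_nonneg {Z : Type*} [MetricSpace Z] [MeasurableSpace Z] (ρ : Measure (Z × Z)) :
    0 ≤ ∫ p : Z × Z, dist p.1 p.2 ^ 2 ∂ρ :=
  integral_nonneg fun _ => sq_nonneg _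

section EW

variable {X₁ X₂ Z : Type*} [MetricSpace X₁] [CompactSpace X₁] [MetricSpace X₂] [CompactSpace X₂]
    [MetricSpace Z] [CompactSpace Z]
    [MeasurableSpace X₁] [BorelSpace X₁] [MeasurableSpace X₂] [BorelSpace X₂]
    [MeasurableSpace Z] [BorelSpace Z]

/-- The minimal penalized objective is at most the transport cost of any coupling of
isometrically embedded copies, since such a coupling pays no penalty. -/
lemma EWobj_le_of_coupling {ξ₁ : Measure X₁} {ξ₂ : Measure X₂}
    [IsProbabilityMeasure ξ₁] [IsProbabilityMeasure ξ₂] {lam : ℝ} (hpos : 0 < lam)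
    {π : Measure (Z × Z)} (hmin : EWobj lam ξ₁ ξ₂ π = EWlamSq Z lam ξ₁ ξ₂)
    {I₁ : msupport ξ₁ → Z} (hI₁ : Isometry I₁) {I₂ : msupport ξ₂ → Z} (hI₂ : Isometry I₂)
    {ρ : Measure (Z × Z)} (hρ : ρ ∈ couplings (pushSupp ξ₁ I₁) (pushSupp ξ₂ I₂)) :
    EWobj lam ξ₁ ξ₂ π ≤ ∫ p : Z × Z, dist p.1 p.2 ^ 2 ∂ρ := by
  have := isProbabilityMeasure_pushSupp ξ₁ hI₁
  have hρp := isProbabilityMeasure_of_mem_couplings hρ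
  have hle : EWlamSq Z lam ξ₁ ξ₂ ≤ EWobj lam ξ₁ ξ₂ ρ := by
    refine ciInf_le (f := fun π : {π : Measure (Z × Z) // IsProbabilityMeasure π} =>
      EWobj lam ξ₁ ξ₂ π.1) ⟨0, ?_⟩ ⟨ρ, hρp⟩
    rintro _ ⟨σ, rfl⟩
    exact add_nonneg (cost_nonneg _)
      (mul_nonneg hpos.le (add_nonneg (GWsq_nonneg _ _) (GWsq_nonneg _ _)))
  have heq : EWobj lam ξ₁ ξ₂ ρ = ∫ p : Z × Z, dist p.1 p.2 ^ 2 ∂ρ := by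
    rw [EWobj, hρ.1, hρ.2, GWsq_pushSupp ξ₁ hI₁, GWsq_pushSupp ξ₂ hI₂]
    simp
  rw [hmin, ← heq]
  exact hle

end EW

theorem stmt11
    {X₁ X₂ Z : Type*} [MetricSpace X₁] [CompactSpace X₁] [MetricSpace X₂] [CompactSpace X₂]
    [MetricSpace Z] [CompactSpace Z]
    [MeasurableSpace X₁] [BorelSpace X₁] [MeasurableSpace X₂] [BorelSpace X₂]
    [MeasurableSpace Z] [BorelSpace Z]
    (ξ₁ : Measure X₁) (ξ₂ : Measure X₂) [IsProbabilityMeasure ξ₁] [IsProbabilityMeasure ξ₂]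
    (h₁ : ∃ f : msupport ξ₁ → Z, Isometry f) (h₂ : ∃ f : msupport ξ₂ → Z, Isometry f)
    (lam : ℕ → ℝ) (hpos : ∀ n, 0 < lam n) (hlam : Tendsto lam atTop atTop)
    (π : ℕ → Measure (Z × Z)) (hprob : ∀ n, IsProbabilityMeasure (π n))
    (hmin : ∀ n, EWobj (lam n) ξ₁ ξ₂ (π n) = EWlamSq Z (lam n) ξ₁ ξ₂) :
    ∃ φ : ℕ → ℕ, StrictMono φ ∧
      ∃ πl : Measure (Z × Z), IsProbabilityMeasure πl ∧
        WeakConv (fun n => π (φ n)) πl ∧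
        ∃ (I₁ : {f : msupport ξ₁ → Z // Isometry f})
          (I₂ : {f : msupport ξ₂ → Z // Isometry f}),
          W2sq (pushSupp ξ₁ I₁.1) (pushSupp ξ₂ I₂.1) = EWsq Z ξ₁ ξ₂ ∧
          πl ∈ couplings (pushSupp ξ₁ I₁.1) (pushSupp ξ₂ I₂.1) ∧
          (∫ p : Z × Z, dist p.1 p.2 ^ 2 ∂πl)
            = W2sq (pushSupp ξ₁ I₁.1) (pushSupp ξ₂ I₂.1) := by
  -- A fixed competitor bounds all the penalized objectives.
  obtain ⟨C, hC⟩ : ∃ C, ∀ n, EWobj (lam n) ξ₁ ξ₂ (π n) ≤ C := by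
    obtain ⟨f₁, hf₁⟩ := h₁
    obtain ⟨f₂, hf₂⟩ := h₂
    have := isProbabilityMeasure_pushSupp ξ₁ hf₁
    have := isProbabilityMeasure_pushSupp ξ₂ hf₂
    exact ⟨_, fun n => EWobj_le_of_coupling (hpos n) (hmin n) hf₁ hf₂ (prod_mem_couplings _ _)⟩
  have hquot : Tendsto (fun n => C / lam n) atTop (𝓝 0) := hlam.const_div_atTop C
  have hbound : ∀ n, GWsq ξ₁ ((π n).map Prod.fst) + GWsq ξ₂ ((π n).map Prod.snd) ≤ C / lam n := by
    intro n
    rw [le_div_iff₀ (hpos n)]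
    have h1 := hC n
    have h2 := cost_nonneg (π n)
    unfold EWobj at h1
    linarith
  have hG₁ : Tendsto (fun n => GWsq ξ₁ ((π n).map Prod.fst)) atTop (𝓝 0) :=
    squeeze_zero (fun n => GWsq_nonneg _ _)
      (fun n => (le_add_of_nonneg_right (GWsq_nonneg _ _)).trans (hbound n)) hquot
  have hG₂ : Tendsto (fun n => GWsq ξ₂ ((π n).map Prod.snd)) atTop (𝓝 0) :=
    squeeze_zero (fun n => GWsq_nonneg _ _)
      (fun n => (le_add_of_nonneg_left (GWsq_nonneg _ _)).trans (hbound n)) hquot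
  let P : ℕ → ProbabilityMeasure (Z × Z) := fun n => ⟨π n, hprob n⟩
  obtain ⟨πl, φ, hφ, hlim⟩ := CompactSpace.tendsto_subseq P
  have hweak : WeakConv (fun n => π (φ n)) πl.toMeasure := fun g hg =>
    ((ProbabilityMeasure.continuous_integral_continuousMap (⟨g, hg⟩ : C(Z × Z, ℝ))).tendsto
      πl).comp hlim
  obtain ⟨I₁, hI₁, hm₁⟩ := exists_isometry_of_tendsto (ξ := ξ₁)
    (ProbabilityMeasure.tendsto_map_of_tendsto_of_continuous _ _ hlim continuous_fst)
    (hG₁.comp hφ.tendsto_atTop)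
  obtain ⟨I₂, hI₂, hm₂⟩ := exists_isometry_of_tendsto (ξ := ξ₂)
    (ProbabilityMeasure.tendsto_map_of_tendsto_of_continuous _ _ hlim continuous_snd)
    (hG₂.comp hφ.tendsto_atTop)
  have hcpl : πl.toMeasure ∈ couplings (pushSupp ξ₁ I₁) (pushSupp ξ₂ I₂) := ⟨hm₁, hm₂⟩
  have hopt : ∀ (J₁ : {f : msupport ξ₁ → Z // Isometry f})
      (J₂ : {f : msupport ξ₂ → Z // Isometry f}),
      ∫ p : Z × Z, dist p.1 p.2 ^ 2 ∂πl.toMeasure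
        ≤ W2sq (pushSupp ξ₁ J₁.1) (pushSupp ξ₂ J₂.1) := by
    intro J₁ J₂
    have := isProbabilityMeasure_pushSupp ξ₁ J₁.2
    have := isProbabilityMeasure_pushSupp ξ₂ J₂.2
    have : Nonempty (couplings (pushSupp ξ₁ J₁.1) (pushSupp ξ₂ J₂.1)) :=
      ⟨⟨_, prod_mem_couplings _ _⟩⟩
    refine le_ciInf fun ρ => ?_
    refine le_of_tendsto (hweak (fun p => dist p.1 p.2 ^ 2) (by fun_prop))
      (Eventually.of_forall fun n => ?_)
    refine le_trans ?_ (EWobj_le_of_coupling (hpos (φ n)) (hmin (φ n)) J₁.2 J₂.2 ρ.2)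
    exact le_add_of_nonneg_right
      (mul_nonneg (hpos _).le (add_nonneg (GWsq_nonneg _ _) (GWsq_nonneg _ _)))
  have hW_nonneg : ∀ μ ν : Measure Z, 0 ≤ W2sq μ ν := fun μ ν =>
    Real.iInf_nonneg fun ρ => cost_nonneg ρ.1
  have hW : ∫ p : Z × Z, dist p.1 p.2 ^ 2 ∂πl.toMeasure
      = W2sq (pushSupp ξ₁ I₁) (pushSupp ξ₂ I₂) := by
    refine le_antisymm (hopt ⟨I₁, hI₁⟩ ⟨I₂, hI₂⟩) ?_
    exact ciInf_le (f := fun ρ : couplings (pushSupp ξ₁ I₁) (pushSupp ξ₂ I₂) =>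
        ∫ p : Z × Z, dist p.1 p.2 ^ 2 ∂ρ.1)
      ⟨0, by rintro _ ⟨ρ, rfl⟩; exact cost_nonneg ρ.1⟩ ⟨_, hcpl⟩
  refine ⟨φ, hφ, πl.toMeasure, inferInstance, hweak, ⟨I₁, hI₁⟩, ⟨I₂, hI₂⟩, ?_, hcpl, hW⟩
  have : Nonempty {f : msupport ξ₁ → Z // Isometry f} := ⟨⟨I₁, hI₁⟩⟩
  have : Nonempty {f : msupport ξ₂ → Z // Isometry f} := ⟨⟨I₂, hI₂⟩⟩
  refine le_antisymm ?_ ?_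
  · exact le_ciInf fun J₁ => le_ciInf fun J₂ => hW.symm.le.trans (hopt J₁ J₂)
  · refine (ciInf_le (f := fun J₁ : {f : msupport ξ₁ → Z // Isometry f} =>
      ⨅ J₂ : {f : msupport ξ₂ → Z // Isometry f}, W2sq (pushSupp ξ₁ J₁.1) (pushSupp ξ₂ J₂.1))
      ⟨0, ?_⟩ ⟨I₁, hI₁⟩).trans ?_
    · rintro _ ⟨J₁, rfl⟩
      exact Real.iInf_nonneg fun J₂ => hW_nonneg _ _
    · exact ciInf_le (f := fun J₂ : {f : msupport ξ₂ → Z // Isometry f} =>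
        W2sq (pushSupp ξ₁ I₁) (pushSupp ξ₂ J₂.1))
        ⟨0, by rintro _ ⟨J₂, rfl⟩; exact hW_nonneg _ _⟩ ⟨I₂, hI₂⟩
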